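/- Let Γ be a truth-table reduction from 2^ℕ to 2^ℕ: there is a computable, monotone (with respect to the prefix order) map y ↦ Γ^y on binary strings and a strictly increasing computable function f : ℕ → ℕ such that |Γ^y| ≥ n whenever |y| = f(n), inducing a total continuous map Γ : 2^ℕ → 2^ℕ with Γ(Z)↾n determined by Z↾f(n). Let ν be a Borel probability measure on 2^ℕ and μ = Γ(ν) its pushforward. Then K(μ↾n) ≤⁺ K(ν↾f(n)) and C(μ↾n) ≤⁺ C(ν↾f(n)). In particular, if ν is K-trivial then μ is K-trivial, and if ν is C-trivial then μ is C-trivial. -/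

import Mathlib

open MeasureTheory Filter

/-- Cantor space: the space of infinite binary sequences. -/
abbrev Cantor : Type := ℕ → Bool

/-- Finite binary strings. -/
abbrev BStr : Type := List Bool

/-- The cylinder set of sequences extending the string `x`. -/
def cyl (x : BStr) : Set Cantor := {Z | ∀ i : Fin x.length, Z i.1 = x.get i}

/-- The string of the first `n` bits of `Z`. -/
def seg (Z : Cantor) (n : ℕ) : BStr := List.ofFn fun i : Fin n => Z i.1

/-- `lam` is the uniform (fair-coin product) measure: every cylinder `[x]`
has measure `2^{-|x|}`. -/
def IsUniform (lam : Measure Cantor) : Prop :=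
  ∀ x : BStr, lam (cyl x) = (2 : ENNReal)⁻¹ ^ x.length

/-- `(G_m)` is a Martin-Löf test with respect to the measure `ρ`:
the sets `G_m` are uniformly effectively open and `ρ (G_m) ≤ 2^{-m}`. -/
def IsMLTest (ρ : Measure Cantor) (G : ℕ → Set Cantor) : Prop :=
  (∃ σ : ℕ → ℕ → BStr, Computable₂ σ ∧ ∀ m, G m = ⋃ i, cyl (σ m i)) ∧
  ∀ m, ρ (G m) ≤ (2 : ENNReal)⁻¹ ^ m

/-- `μ` is Martin-Löf absolutely continuous in `ρ`: `inf_m μ(G_m) = 0`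
for every `ρ`-Martin-Löf test `(G_m)`. -/
def MLAC (μ ρ : Measure Cantor) : Prop :=
  ∀ G : ℕ → Set Cantor, IsMLTest ρ G → ⨅ m, μ (G m) = 0

/-- `Z` is Martin-Löf random with respect to `lam`. -/
def MLRandom (lam : Measure Cantor) (Z : Cantor) : Prop :=
  ∀ G : ℕ → Set Cantor, IsMLTest lam G → Z ∉ ⋂ m, G m

/-- `ρ` is a computable measure: `ρ [x]` is a computable real, uniformly in `x`. -/
def ComputableMeasure (ρ : Measure Cantor) : Prop :=
  ∃ q : BStr → ℕ → ℚ, Computable₂ q ∧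
    ∀ x k, |(q x k : ℝ) - (ρ (cyl x)).toReal| ≤ (2 : ℝ)⁻¹ ^ k

/-- `U` is a universal plain machine. -/
def UniversalPlain (U : BStr →. BStr) : Prop :=
  Partrec U ∧ ∀ M : BStr →. BStr, Partrec M →
    ∃ c : ℕ, ∀ p x, x ∈ M p → ∃ q : BStr, q.length ≤ p.length + c ∧ x ∈ U q

/-- The domain of `M` is an antichain under the prefix relation. -/
def PrefixFreeDom (M : BStr →. BStr) : Prop :=
  ∀ p q : BStr, (M p).Dom → (M q).Dom → p <+: q → p = q

/-- `U` is a universal prefix-free machine. -/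
def UniversalPrefixFree (U : BStr →. BStr) : Prop :=
  Partrec U ∧ PrefixFreeDom U ∧
  ∀ M : BStr →. BStr, Partrec M → PrefixFreeDom M →
    ∃ c : ℕ, ∀ p x, x ∈ M p → ∃ q : BStr, q.length ≤ p.length + c ∧ x ∈ U q

/-- Kolmogorov complexity of the string `x` with respect to the machine `U`:
the minimal length of a `U`-description of `x`. -/
noncomputable def cpx (U : BStr →. BStr) (x : BStr) : ℕ :=
  sInf {n | ∃ q : BStr, q.length = n ∧ x ∈ U q}

/-- A natural number `n` identified with the string `0^n`. -/
def numStr (n : ℕ) : BStr := List.replicate n false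

/-- Complexity of the natural number `n` (i.e., of the string `0^n`). -/
noncomputable def cpxN (U : BStr →. BStr) (n : ℕ) : ℕ := cpx U (numStr n)

/-- The `μ`-average complexity of the strings of length `n`:
`Σ_{|x|=n} cpx(x) · μ[x]`. -/
noncomputable def avgCpx (U : BStr →. BStr) (μ : Measure Cantor) (n : ℕ) : ℝ :=
  ∑ v : Fin n → Bool, (cpx U (List.ofFn v) : ℝ) * (μ (cyl (List.ofFn v))).toReal

/-- A measure `μ` is trivial for the complexity given by the machine `U`
(e.g. K-trivial when `U` is the universal prefix-free machine, C-trivial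
when `U` is the universal plain machine). -/
def MeasTrivial (U : BStr →. BStr) (μ : Measure Cantor) : Prop :=
  ∃ c : ℝ, ∀ n : ℕ, avgCpx U μ n ≤ (cpxN U n : ℝ) + c

/-!
A program for `seg Z (f n)` also determines `n`, because `f` is computable and injective, so it can
be turned effectively into a program for `seg (G Z) n`, the first `n` bits of `γ (seg Z (f n))`.
Hence the complexity of `seg (G Z) n` exceeds that of `seg Z (f n)` by at most a constant
independent of `Z` and `n`. Since `avgCpx U μ n` is the integral of the complexity of `seg Z n` over
`μ`, integrating this pointwise bound over `ν` and changing variables along `G` bounds the averages.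
Triviality is inherited because `f n` is no more complex than `n`, up to a constant.
-/

/-- The machine `U` simulates the machine `M`: up to an additive constant, `U`-descriptions are as
short as `M`-descriptions. Universality of `U` is simulation of every machine of a given class. -/
def Simulates (U M : BStr →. BStr) : Prop :=
  ∃ c : ℕ, ∀ p x, x ∈ M p → ∃ q : BStr, q.length ≤ p.length + c ∧ x ∈ U q

/-- Complexity with respect to `U` does not increase, up to an additive constant, under partial
computable maps. This is the one property of `C` and `K` that the comparison of averages needs. -/
def CpxNonincreasing (U : BStr →. BStr) : Prop :=
  ∀ h : BStr →. BStr, Partrec h → ∃ c : ℕ, ∀ y x, x ∈ h y → cpx U x ≤ cpx U y + c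

section Machines

variable {U M : BStr →. BStr}

theorem cpx_le_length {p x : BStr} (hp : x ∈ U p) : cpx U x ≤ p.length :=
  Nat.sInf_le ⟨p, rfl, hp⟩

/-- If `U` never outputs `x`, then `cpx U x` has the junk value `sInf ∅ = 0`. -/
theorem exists_length_eq_cpx {x : BStr} (hx : ∃ p, x ∈ U p) :
    ∃ p : BStr, p.length = cpx U x ∧ x ∈ U p :=
  let ⟨p, hp⟩ := hx
  Nat.sInf_mem (s := {n | ∃ q : BStr, q.length = n ∧ x ∈ U q}) ⟨p.length, p, rfl, hp⟩

theorem Simulates.exists_mem (hUM : Simulates U M) {p x : BStr} (hx : x ∈ M p) : ∃ q, x ∈ U q :=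
  let ⟨_, hc⟩ := hUM
  let ⟨q, _, hq⟩ := hc p x hx
  ⟨q, hq⟩

theorem cpxNonincreasing_of_simulates_bind (hsurj : ∀ x, ∃ p, x ∈ U p)
    (hsim : ∀ h : BStr →. BStr, Partrec h → Simulates U fun p => (U p).bind h) :
    CpxNonincreasing U := by
  intro h hh
  obtain ⟨c, hc⟩ := hsim h hh
  refine ⟨c, fun y x hx => ?_⟩
  obtain ⟨p, hp, hyp⟩ := exists_length_eq_cpx (hsurj y)
  obtain ⟨q, hq, hxq⟩ := hc p x (Part.mem_bind hyp hx)
  calc cpx U x ≤ q.length := cpx_le_length hxq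
    _ ≤ cpx U y + c := hp ▸ hq

theorem UniversalPlain.cpxNonincreasing (hU : UniversalPlain U) : CpxNonincreasing U := by
  refine cpxNonincreasing_of_simulates_bind (fun x => ?_)
    fun h hh => hU.2 _ (hU.1.bind (hh.comp Computable.snd).to₂)
  have hsim : Simulates U fun _ => Part.some x := hU.2 _ (Computable.const x).partrec
  exact hsim.exists_mem (p := []) (Part.mem_some x)

/-- The machine whose only program is the empty string, with output `x`. It is prefix-free, so it
shows that a universal prefix-free machine outputs every string. -/
def emptyProgramMachine (x : BStr) : BStr →. BStr :=
  fun p => bif decide (p = []) then Part.some x else Part.none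

theorem mem_emptyProgramMachine (x : BStr) : x ∈ emptyProgramMachine x [] :=
  Part.mem_some x

theorem partrec_emptyProgramMachine (x : BStr) : Partrec (emptyProgramMachine x) :=
  Partrec.cond (PrimrecPred.decide (Primrec.eq.comp Primrec.id (Primrec.const []))).to_comp
    (Computable.const x).partrec Partrec.none

theorem prefixFreeDom_emptyProgramMachine (x : BStr) : PrefixFreeDom (emptyProgramMachine x) := by
  have eq_nil_of_dom : ∀ p, (emptyProgramMachine x p).Dom → p = [] := by
    intro p hp
    by_contra hne
    simp [emptyProgramMachine, hne] at hp
  intro p q hp hq _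
  rw [eq_nil_of_dom p hp, eq_nil_of_dom q hq]

theorem PrefixFreeDom.bind (hU : PrefixFreeDom U) (h : BStr →. BStr) :
    PrefixFreeDom fun p => (U p).bind h :=
  fun p q hp hq => hU p q hp.of_bind hq.of_bind

theorem UniversalPrefixFree.cpxNonincreasing (hU : UniversalPrefixFree U) :
    CpxNonincreasing U := by
  obtain ⟨hpart, hfree, huniv⟩ := hU
  refine cpxNonincreasing_of_simulates_bind (fun x => ?_)
    fun h hh => huniv _ (hpart.bind (hh.comp Computable.snd).to₂) (hfree.bind h)
  have hsim : Simulates U (emptyProgramMachine x) :=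
    huniv _ (partrec_emptyProgramMachine x) (prefixFreeDom_emptyProgramMachine x)
  exact hsim.exists_mem (mem_emptyProgramMachine x)

end Machines

section ComputableMaps

theorem computable_numStr : Computable numStr :=
  ((Primrec.list_map Primrec.list_range (Primrec.const false).to₂).of_eq fun n => by
    simp [numStr]).to_comp

theorem exists_partrec_leftInverse_of_injective {σ : Type*} [Primcodable σ] {f : ℕ → σ}
    (hf : Computable f) (hinj : Function.Injective f) :
    ∃ g : σ →. ℕ, Partrec g ∧ ∀ n, n ∈ g (f n) := by
  classical
  have hdec : Computable₂ fun (s : σ) (n : ℕ) => decide (f n = s) :=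
    (PrimrecPred.decide Primrec.eq).to_comp.comp ((hf.comp Computable.snd).pair Computable.fst)
  refine ⟨fun s => Nat.rfind fun n => Part.some (decide (f n = s)),
    Partrec.rfind hdec.partrec₂, fun n => Nat.mem_rfind.2 ⟨by simp, fun {m} hm => ?_⟩⟩
  simpa using hinj.ne hm.ne

variable {U : BStr →. BStr} {f : ℕ → ℕ}

theorem CpxNonincreasing.exists_cpxN_comp_le (hU : CpxNonincreasing U) (hf : Computable f) :
    ∃ c : ℕ, ∀ n, cpxN U (f n) ≤ cpxN U n + c := by
  obtain ⟨c, hc⟩ := hU (fun y => Part.some (numStr (f y.length)))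
    (computable_numStr.comp (hf.comp Computable.list_length)).partrec
  exact ⟨c, fun n => hc _ _ (by simp [numStr])⟩

theorem CpxNonincreasing.exists_cpx_take_le (hU : CpxNonincreasing U) {γ : BStr → BStr}
    (hγ : Computable γ) (hf : Computable f) (hinj : Function.Injective f) :
    ∃ c : ℕ, ∀ n y, y.length = f n → cpx U ((γ y).take n) ≤ cpx U y + c := by
  obtain ⟨g, hg, hgf⟩ := exists_partrec_leftInverse_of_injective hf hinj
  have htake : Computable₂ fun (y : BStr) (n : ℕ) => (γ y).take n :=
    (Primrec.list_take.comp Primrec.snd Primrec.fst).to_comp.comp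
      ((hγ.comp Computable.fst).pair Computable.snd)
  obtain ⟨c, hc⟩ := hU (fun y => (g y.length).map (γ y).take)
    ((hg.comp Computable.list_length).map htake)
  exact ⟨c, fun n y hy => hc _ _ (Part.mem_map _ (hy ▸ hgf n))⟩

end ComputableMaps

section Averages

theorem length_seg (Z : Cantor) (n : ℕ) : (seg Z n).length = n :=
  List.length_ofFn

theorem getD_seg (Z : Cantor) {i n : ℕ} (hi : i < n) (b : Bool) : (seg Z n).getD i b = Z i := by
  simp [seg, hi]

theorem mem_cyl_ofFn_iff {n : ℕ} {v : Fin n → Bool} {Z : Cantor} :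
    Z ∈ cyl (List.ofFn v) ↔ (fun i : Fin n => Z i) = v := by
  constructor
  · intro hZ
    funext i
    simpa using hZ ⟨i, by simp⟩
  · rintro rfl i
    simp

theorem continuous_comp_seg {α : Type*} [TopologicalSpace α] (F : BStr → α) (n : ℕ) :
    Continuous fun Z => F (seg Z n) :=
  (continuous_of_discreteTopology (f := fun v : Fin n → Bool => F (List.ofFn v))).comp
    (by fun_prop : Continuous fun (Z : Cantor) (i : Fin n) => Z i)

theorem continuous_of_seg_eq {G : Cantor → Cantor} {f : ℕ → ℕ} {F : ℕ → BStr → BStr}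
    (hG : ∀ Z n, F n (seg Z (f n)) = seg (G Z) n) : Continuous G := by
  refine continuous_pi fun i => ?_
  refine (continuous_comp_seg (fun y => (F (i + 1) y).getD i false) (f (i + 1))).congr fun Z => ?_
  rw [hG, getD_seg _ i.lt_succ_self]

variable (U : BStr →. BStr) (μ : Measure Cantor) [IsFiniteMeasure μ]

theorem integrable_comp_seg {E : Type*} [NormedAddCommGroup E] (F : BStr → E) (n : ℕ) :
    Integrable (fun Z => F (seg Z n)) μ :=
  (continuous_comp_seg F n).integrable_of_hasCompactSupport (HasCompactSupport.of_compactSpace _)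

theorem avgCpx_eq_integral (n : ℕ) : avgCpx U μ n = ∫ Z, (cpx U (seg Z n) : ℝ) ∂μ := by
  have hrestrict : Measurable fun (Z : Cantor) (i : Fin n) => Z i := by fun_prop
  calc avgCpx U μ n
      = ∫ v, (cpx U (List.ofFn v) : ℝ) ∂μ.map fun (Z : Cantor) (i : Fin n) => Z i := by
        rw [integral_fintype .of_finite]
        refine Finset.sum_congr rfl fun v _ => ?_
        have hcyl : (fun (Z : Cantor) (i : Fin n) => Z i) ⁻¹' {v} = cyl (List.ofFn v) :=
          Set.ext fun Z => mem_cyl_ofFn_iff.symm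
        rw [map_measureReal_apply hrestrict (measurableSet_singleton v), hcyl, smul_eq_mul,
          mul_comm, Measure.real]
    _ = ∫ Z, (cpx U (seg Z n) : ℝ) ∂μ :=
        integral_map hrestrict.aemeasurable (measurable_of_countable _).aestronglyMeasurable

variable {U}

theorem avgCpx_map_le {G : Cantor → Cantor} (hG : Measurable G) {m n c : ℕ}
    (hc : ∀ Z, cpx U (seg (G Z) m) ≤ cpx U (seg Z n) + c) :
    avgCpx U (μ.map G) m ≤ avgCpx U μ n + μ.real Set.univ * c := by
  have hpointwise (Z : Cantor) : (cpx U (seg (G Z) m) : ℝ) ≤ cpx U (seg Z n) + (c : ℝ) :=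
    mod_cast hc Z
  have hint := integrable_comp_seg μ (fun x => (cpx U x : ℝ)) n
  calc avgCpx U (μ.map G) m
      = ∫ Z, (cpx U (seg (G Z) m) : ℝ) ∂μ := by
        rw [avgCpx_eq_integral, integral_map hG.aemeasurable
          (continuous_comp_seg (fun x => (cpx U x : ℝ)) m).aestronglyMeasurable]
    _ ≤ ∫ Z, ((cpx U (seg Z n) : ℝ) + (c : ℝ)) ∂μ :=
        integral_mono ((integrable_comp_seg _ (fun x => (cpx U x : ℝ)) m).comp_measurable hG)
          (hint.add (integrable_const _)) hpointwise
    _ = avgCpx U μ n + μ.real Set.univ * c := by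
        rw [integral_add hint (integrable_const _), integral_const, smul_eq_mul,
          avgCpx_eq_integral]

end Averages

theorem CpxNonincreasing.measTrivial_of_avgCpx_le {U : BStr →. BStr}
    (hU : CpxNonincreasing U) {μ ν : Measure Cantor} {f : ℕ → ℕ} (hf : Computable f)
    {c : ℝ} (hc : ∀ n, avgCpx U μ n ≤ avgCpx U ν (f n) + c) (hν : MeasTrivial U ν) :
    MeasTrivial U μ := by
  obtain ⟨d, hd⟩ := hν
  obtain ⟨e, he⟩ := hU.exists_cpxN_comp_le hf
  refine ⟨e + d + c, fun n => ?_⟩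
  calc avgCpx U μ n ≤ avgCpx U ν (f n) + c := hc n
    _ ≤ cpxN U (f n) + d + c := by gcongr; exact hd (f n)
    _ ≤ (cpxN U n + e : ℕ) + d + c := by gcongr; exact he n
    _ = cpxN U n + (e + d + c) := by push_cast; ring

theorem tt_reduction_complexity_bound_general {U : BStr →. BStr} (hU : CpxNonincreasing U)
    {γ : BStr → BStr} (hγ : Computable γ) {f : ℕ → ℕ} (hf : Computable f)
    (hinj : Function.Injective f) {G : Cantor → Cantor}
    (hG : ∀ (Z : Cantor) (n : ℕ), (γ (seg Z (f n))).take n = seg (G Z) n)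
    (ν : Measure Cantor) [IsFiniteMeasure ν] :
    (∃ c : ℝ, ∀ n : ℕ, avgCpx U (Measure.map G ν) n ≤ avgCpx U ν (f n) + c) ∧
    (MeasTrivial U ν → MeasTrivial U (Measure.map G ν)) := by
  have hGm : Measurable G := (continuous_of_seg_eq (F := fun n y => (γ y).take n) hG).measurable
  obtain ⟨c, hc⟩ := hU.exists_cpx_take_le hγ hf hinj
  have havg (n : ℕ) :
      avgCpx U (Measure.map G ν) n ≤ avgCpx U ν (f n) + ν.real Set.univ * c :=
    avgCpx_map_le ν hGm fun Z => hG Z n ▸ hc n (seg Z (f n)) (length_seg Z (f n))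
  exact ⟨⟨_, havg⟩, hU.measTrivial_of_avgCpx_le hf havg⟩

/-- let `Γ` be a truth-table reduction, given by a computable
monotone map `γ` on strings with strictly increasing computable use bound `f`
(so that `|Γ^y| ≥ n` whenever `|y| = f(n)`), inducing the total continuous map
`G : 2^ℕ → 2^ℕ` with `G(Z)↾n` determined by `Z↾f(n)`. For the pushforward
`μ = Γ(ν)` of any measure `ν` we have `K(μ↾n) ≤⁺ K(ν↾f(n))` and
`C(μ↾n) ≤⁺ C(ν↾f(n))`; in particular K-triviality and C-triviality of `ν`
are inherited by `μ`. -/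
theorem tt_reduction_complexity_bound
    (U UK : BStr →. BStr) (hU : UniversalPlain U) (hUK : UniversalPrefixFree UK)
    (hlenC : ∀ x : BStr, cpxN U x.length ≤ cpx U x)
    (hlenK : ∀ x : BStr, cpxN UK x.length ≤ cpx UK x)
    (γ : BStr → BStr) (hγ : Computable γ)
    (hmono : ∀ y₁ y₂ : BStr, y₁ <+: y₂ → γ y₁ <+: γ y₂)
    (f : ℕ → ℕ) (hf : Computable f) (hfmono : StrictMono f)
    (huse : ∀ (n : ℕ) (y : BStr), y.length = f n → n ≤ (γ y).length)
    (G : Cantor → Cantor) (hG : ∀ (Z : Cantor) (n : ℕ), (γ (seg Z (f n))).take n = seg (G Z) n)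
    (ν : Measure Cantor) [IsProbabilityMeasure ν] :
    (∃ c : ℝ, ∀ n : ℕ, avgCpx UK (Measure.map G ν) n ≤ avgCpx UK ν (f n) + c) ∧
    (∃ c : ℝ, ∀ n : ℕ, avgCpx U (Measure.map G ν) n ≤ avgCpx U ν (f n) + c) ∧
    (MeasTrivial UK ν → MeasTrivial UK (Measure.map G ν)) ∧
    (MeasTrivial U ν → MeasTrivial U (Measure.map G ν)) := by
  have hK := tt_reduction_complexity_bound_general hUK.cpxNonincreasing hγ hf hfmono.injective hG ν
  have hC := tt_reduction_complexity_bound_general hU.cpxNonincreasing hγ hf hfmono.injective hG ν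
  exact ⟨hK.1, hC.1, hK.2, hC.2⟩
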